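/- The dilation wavelet family forms a dyadic partition of unity in energy: Σ_{ℓ∈ℤ} |φ₁(2^ℓ a)|² = 1 for all a > 0. -/

import Mathlib

/-- The auxiliary Meyer function `ν`. -/
noncomputable def meyerNu (u : ℝ) : ℝ :=
  if u < 0 then 0
  else if u ≤ 1 then 35 * u ^ 4 - 84 * u ^ 5 + 70 * u ^ 6 - 20 * u ^ 7
  else 1

/-- The dilation wavelet `φ₁`. -/
noncomputable def dilWavelet (a : ℝ) : ℝ :=
  if 1 / 3 ≤ |a| ∧ |a| ≤ 2 / 3 then Real.sin (Real.pi / 2 * meyerNu (3 * a - 1))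
  else if 2 / 3 ≤ |a| ∧ |a| ≤ 4 / 3 then Real.cos (Real.pi / 2 * meyerNu (3 * a / 2 - 1))
  else 0

/-- The boost bump `φ₂(θ) = √(ν(δ(1 − |θ|)))`. -/
noncomputable def boostBump (δ θ : ℝ) : ℝ := Real.sqrt (meyerNu (δ * (1 - |θ|)))

/-- The Meyer scaling function `φ`. -/
noncomputable def meyerScaling (a : ℝ) : ℝ :=
  if |a| ≤ 1 / 3 then 1
  else if |a| ≤ 2 / 3 then Real.cos (Real.pi / 2 * meyerNu (3 * a - 1))
  else 0

theorem dilWavelet_low (c : ℝ) (h0 : 0 < c) (h : c ≤ 1 / 3) : dilWavelet c = 0 := by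
  unfold dilWavelet
  rw [abs_of_pos h0]
  rcases h.lt_or_eq with h | h
  · rw [if_neg (by intro h'; linarith [h'.1]), if_neg (by intro h'; linarith [h'.1])]
  · subst h
    rw [if_pos (by norm_num)]
    norm_num [meyerNu]

theorem dilWavelet_high (c : ℝ) (h : 4 / 3 < c) : dilWavelet c = 0 := by
  unfold dilWavelet
  rw [abs_of_pos (by linarith)]
  rw [if_neg (by intro h'; linarith [h'.2]), if_neg (by intro h'; linarith [h'.2])]

/-- The dilation wavelet family forms a dyadic partition of unity in energy:
`Σ_{ℓ∈ℤ} |φ₁(2^ℓ a)|² = 1` for all `a > 0`. -/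
theorem dilWavelet_partition (a : ℝ) (ha : 0 < a) :
    ∑' ℓ : ℤ, |dilWavelet ((2 : ℝ) ^ ℓ * a)| ^ 2 = 1 := by
  obtain ⟨n, hn1, hn2⟩ := exists_mem_Ioc_zpow (x := 3 * a) (y := (2 : ℝ))
    (by positivity) (by norm_num)
  obtain ⟨b, hb⟩ : ∃ b, b = (2 : ℝ) ^ (-n) * a := ⟨_, rfl⟩
  have hpos : (0 : ℝ) < 2 ^ n := by positivity
  have hab : a = 2 ^ n * b := by
    rw [hb, zpow_neg]; field_simp
  rw [zpow_add₀ (by norm_num), zpow_one] at hn2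
  have hb1 : 1 / 3 < b := by
    by_contra hc
    push Not at hc
    nlinarith
  have hb2 : b ≤ 2 / 3 := by
    by_contra hc
    push Not at hc
    nlinarith
  have hterm : ∀ ℓ : ℤ, (2 : ℝ) ^ ℓ * a = 2 ^ (ℓ + n) * b := by
    intro ℓ
    rw [hab, zpow_add₀ (by norm_num)]; ring
  rw [tsum_eq_sum (s := {-n, -n + 1})]
  · rw [Finset.sum_pair (by omega), hterm, hterm]
    have e1 : (2 : ℝ) ^ (-n + n) * b = b := by simp
    have e2 : (2 : ℝ) ^ (-n + 1 + n) * b = 2 * b := by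
      rw [show -n + 1 + n = 1 by ring]; simp
    rw [e1, e2, sq_abs, sq_abs]
    unfold dilWavelet
    rw [abs_of_pos (show 0 < b by linarith), abs_of_pos (show 0 < 2 * b by linarith),
      if_pos ⟨hb1.le, hb2⟩, if_neg (by intro h'; linarith [h'.2]),
      if_pos ⟨by linarith, by linarith⟩, show 3 * (2 * b) / 2 - 1 = 3 * b - 1 by ring]
    exact Real.sin_sq_add_cos_sq _
  · intro ℓ hℓ
    simp only [Finset.mem_insert, Finset.mem_singleton, not_or] at hℓ
    have : dilWavelet ((2 : ℝ) ^ ℓ * a) = 0 := by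
      rw [hterm]
      rcases (show ℓ + n ≤ -1 ∨ 2 ≤ ℓ + n by omega) with h | h
      · have h2 : (2 : ℝ) ^ (ℓ + n) ≤ 2 ^ (-1 : ℤ) := zpow_le_zpow_right₀ (by norm_num) h
        apply dilWavelet_low
        · have : 0 < b := by linarith
          positivity
        · norm_num at h2
          nlinarith
      · have h2 : (2 : ℝ) ^ (2 : ℤ) ≤ 2 ^ (ℓ + n) := zpow_le_zpow_right₀ (by norm_num) h
        apply dilWavelet_high
        norm_num at h2
        nlinarith
    rw [this]; simp
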